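/- Evidence lower bound decomposition for the DGP variational family: in the N-point layered setup below, with joint model density p(y, f_N, f_M) := [∏_{n=1}^{N} p_n(f_n^L)] · [∏_{l=1}^{L} N(f_N^l; A^l(f_N^{l−1}) f_M^l, B^l(f_N^{l−1}))] · [∏_{l=1}^{L} N(f_M^l; 0, P^l)] and variational density q(f_N, f_M) := N(f_M; μ_M, S_M) · ∏_{l=1}^{L} N(f_N^l; A^l(f_N^{l−1}) f_M^l, B^l(f_N^{l−1})), and assuming all integrals below converge absolutely, the evidence lower bound satisfies ∫ q(f_N, f_M) log( p(y, f_N, f_M) / q(f_N, f_M) ) df_N df_M = Σ_{n=1}^{N} ∫ q_n(f) log p_n(f) df − ∫ N(f_M; μ_M, S_M) log( N(f_M; μ_M, S_M) / ∏_{l=1}^{L} N(f_M^l; 0, P^l) ) df_M, where q_n(f) := ∫ q(f_N, f_M) df_M ∏_{n'≠n} df_{n'}^L ∏_{l=1}^{L−1} df_N^l is the marginal density of f_n^L under q; i.e. the ELBO equals the sum of per-datapoint expected log-likelihoods minus the KL divergence from q(f_M) to the prior over inducing outputs. -/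

import Mathlib

open Matrix MeasureTheory Real

noncomputable section

/-- The multivariate Gaussian density
`N(x; μ, S) = (2π)^{−d/2} (det S)^{−1/2} exp(−(1/2)(x−μ)ᵀ S⁻¹ (x−μ))`. -/
def gaussPDF {ι : Type*} [Fintype ι] [DecidableEq ι]
    (μ : ι → ℝ) (S : Matrix ι ι ℝ) (x : ι → ℝ) : ℝ :=
  (2 * Real.pi) ^ (-(Fintype.card ι : ℝ) / 2) * S.det ^ (-(1 : ℝ) / 2) *
    Real.exp (-(1 / 2 : ℝ) * ((x - μ) ⬝ᵥ (S⁻¹ *ᵥ (x - μ))))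

/-- Coordinates of the full `N`-point trajectory `(f_N^0, f_N^1, …, f_N^L)`; the number
of layers is `K + 1 ≥ 1` and layer outputs are indexed by `l : Fin (K + 2)`. -/
abbrev TrajIx (K N : ℕ) (T : Fin (K + 2) → ℕ) : Type :=
  (l : Fin (K + 2)) × (Fin N × Fin (T l))

/-- Coordinates of the latent variables `f_N = (f_N^1, …, f_N^L)` (everything except the
fixed input layer `0`). -/
abbrev LatentIx (K N : ℕ) (T : Fin (K + 2) → ℕ) : Type :=
  {p : TrajIx K N T // p.1 ≠ 0}

/-- Inducing-output coordinates `f_M = (f_M^1, …, f_M^L)`. -/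
abbrev IndIx (K : ℕ) (m : Fin (K + 1) → ℕ) : Type := (l : Fin (K + 1)) × Fin (m l)

/-- The full trajectory determined by the fixed inputs `f0` and the latent variables
contained in `w`. -/
def traj {K N : ℕ} {T : Fin (K + 2) → ℕ} {m : Fin (K + 1) → ℕ}
    (f0 : Fin N × Fin (T 0) → ℝ) (w : (LatentIx K N T ⊕ IndIx K m) → ℝ) :
    TrajIx K N T → ℝ :=
  fun p =>
    if h : p.1 = 0 then f0 (p.2.1, Fin.cast (show T p.1 = T 0 by rw [h]) p.2.2)
    else w (Sum.inl ⟨p, h⟩)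

/-- The variational density
`q(f_N, f_M) = N(f_M; μ_M, S_M) ∏_l N(f_N^l; A^l(f_N^{l−1}) f_M^l, B^l(f_N^{l−1}))`. -/
def qdens {K N : ℕ} {T : Fin (K + 2) → ℕ} {m : Fin (K + 1) → ℕ}
    (f0 : Fin N × Fin (T 0) → ℝ)
    (μM : IndIx K m → ℝ) (SM : Matrix (IndIx K m) (IndIx K m) ℝ)
    (A : ∀ l : Fin (K + 1), ((Fin N × Fin (T l.castSucc)) → ℝ) →
      Matrix (Fin N × Fin (T l.succ)) (Fin (m l)) ℝ)
    (B : ∀ l : Fin (K + 1), ((Fin N × Fin (T l.castSucc)) → ℝ) →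
      Matrix (Fin N × Fin (T l.succ)) (Fin N × Fin (T l.succ)) ℝ)
    (w : (LatentIx K N T ⊕ IndIx K m) → ℝ) : ℝ :=
  gaussPDF μM SM (fun k => w (Sum.inr k)) *
    ∏ l : Fin (K + 1),
      gaussPDF
        (A l (fun q => traj f0 w ⟨l.castSucc, q⟩) *ᵥ fun c => w (Sum.inr ⟨l, c⟩))
        (B l fun q => traj f0 w ⟨l.castSucc, q⟩)
        (fun q => traj f0 w ⟨l.succ, q⟩)

/-- The joint model density
`p(y, f_N, f_M) = [∏_n p_n(f_n^L)] [∏_l N(f_N^l; A^l(f_N^{l−1}) f_M^l, B^l(f_N^{l−1}))]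
[∏_l N(f_M^l; 0, P^l)]`. -/
def pdens {K N : ℕ} {T : Fin (K + 2) → ℕ} {m : Fin (K + 1) → ℕ}
    (f0 : Fin N × Fin (T 0) → ℝ)
    (pLik : Fin N → (Fin (T (Fin.last (K + 1))) → ℝ) → ℝ)
    (A : ∀ l : Fin (K + 1), ((Fin N × Fin (T l.castSucc)) → ℝ) →
      Matrix (Fin N × Fin (T l.succ)) (Fin (m l)) ℝ)
    (B : ∀ l : Fin (K + 1), ((Fin N × Fin (T l.castSucc)) → ℝ) →
      Matrix (Fin N × Fin (T l.succ)) (Fin N × Fin (T l.succ)) ℝ)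
    (P : ∀ l : Fin (K + 1), Matrix (Fin (m l)) (Fin (m l)) ℝ)
    (w : (LatentIx K N T ⊕ IndIx K m) → ℝ) : ℝ :=
  (∏ n' : Fin N, pLik n' fun i => traj f0 w ⟨Fin.last (K + 1), (n', i)⟩) *
    (∏ l : Fin (K + 1),
      gaussPDF
        (A l (fun q => traj f0 w ⟨l.castSucc, q⟩) *ᵥ fun c => w (Sum.inr ⟨l, c⟩))
        (B l fun q => traj f0 w ⟨l.castSucc, q⟩)
        (fun q => traj f0 w ⟨l.succ, q⟩)) *
    ∏ l : Fin (K + 1), gaussPDF (0 : Fin (m l) → ℝ) (P l) (fun c => w (Sum.inr ⟨l, c⟩))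

/-- The latent coordinates other than the final-layer output of data point `n`. -/
abbrev RestIx (K N : ℕ) (T : Fin (K + 2) → ℕ) (n : Fin N) : Type :=
  {p : TrajIx K N T // p.1 ≠ 0 ∧ ¬(p.1 = Fin.last (K + 1) ∧ p.2.1 = n)}

/-- Reassemble the latent variables (and inducing outputs) from `v` together with the
prescribed final-layer output `y` of data point `n`. -/
def reassemble {K N : ℕ} {T : Fin (K + 2) → ℕ} {m : Fin (K + 1) → ℕ} (n : Fin N)
    (y : Fin (T (Fin.last (K + 1))) → ℝ) (v : (RestIx K N T n ⊕ IndIx K m) → ℝ) :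
    (LatentIx K N T ⊕ IndIx K m) → ℝ :=
  fun x =>
    match x with
    | Sum.inr k => v (Sum.inr k)
    | Sum.inl p =>
        if h : p.val.1 = Fin.last (K + 1) ∧ p.val.2.1 = n then
          y (Fin.cast (show T p.val.1 = T (Fin.last (K + 1)) by rw [h.1]) p.val.2.2)
        else v (Sum.inl ⟨p.val, p.property, h⟩)

/-- `q_n`, the marginal density of `f_n^L` under `q`. -/
def qmarg {K N : ℕ} {T : Fin (K + 2) → ℕ} {m : Fin (K + 1) → ℕ}
    (f0 : Fin N × Fin (T 0) → ℝ)
    (μM : IndIx K m → ℝ) (SM : Matrix (IndIx K m) (IndIx K m) ℝ)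
    (A : ∀ l : Fin (K + 1), ((Fin N × Fin (T l.castSucc)) → ℝ) →
      Matrix (Fin N × Fin (T l.succ)) (Fin (m l)) ℝ)
    (B : ∀ l : Fin (K + 1), ((Fin N × Fin (T l.castSucc)) → ℝ) →
      Matrix (Fin N × Fin (T l.succ)) (Fin N × Fin (T l.succ)) ℝ)
    (n : Fin N) (y : Fin (T (Fin.last (K + 1))) → ℝ) : ℝ :=
  ∫ v : (RestIx K N T n ⊕ IndIx K m) → ℝ, qdens f0 μM SM A B (reassemble n y v)

lemma gaussPDF_pos {ι : Type*} [Fintype ι] [DecidableEq ι]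
    (μ : ι → ℝ) {S : Matrix ι ι ℝ} (hS : S.PosDef) (x : ι → ℝ) : 0 < gaussPDF μ S x := by
  have := hS.det_pos
  unfold gaussPDF
  positivity

lemma gauss_std_integral (ι : Type*) [Fintype ι] :
    ∫ z : ι → ℝ, Real.exp (-(1 / 2 : ℝ) * (z ⬝ᵥ z)) =
      (2 * Real.pi) ^ ((Fintype.card ι : ℝ) / 2) := by
  have h : ∀ z : ι → ℝ, Real.exp (-(1 / 2 : ℝ) * (z ⬝ᵥ z)) =
      ∏ i, Real.exp (-(1 / 2 : ℝ) * (z i) ^ 2) := by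
    intro z
    rw [← Real.exp_sum, dotProduct, Finset.mul_sum]
    simp only [sq]
  simp_rw [h]
  rw [integral_fintype_prod_volume_eq_pow (fun x : ℝ => Real.exp (-(1 / 2 : ℝ) * x ^ 2)),
    integral_gaussian, Real.sqrt_eq_rpow, ← Real.rpow_natCast, ← Real.rpow_mul (by positivity)]
  congr 1 <;> ring

open scoped MatrixOrder ComplexOrder in
lemma posDef_factor {ι : Type*} [Fintype ι] [DecidableEq ι] {S : Matrix ι ι ℝ} (hS : S.PosDef) :
    ∃ M : Matrix ι ι ℝ, S = Mᵀ * M := by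
  obtain ⟨M, hM⟩ := CStarAlgebra.nonneg_iff_eq_star_mul_self.mp hS.posSemidef.nonneg
  exact ⟨M, by rw [hM, Matrix.star_eq_conjTranspose, Matrix.conjTranspose_eq_transpose_of_trivial]⟩

lemma gaussPDF_integral {ι : Type*} [Fintype ι] [DecidableEq ι]
    (μ : ι → ℝ) {S : Matrix ι ι ℝ} (hS : S.PosDef) : ∫ x, gaussPDF μ S x = 1 := by
  unfold gaussPDF
  rw [integral_sub_right_eq_self (fun x : ι → ℝ => (2 * Real.pi) ^ (-(Fintype.card ι : ℝ) / 2) *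
    S.det ^ (-(1 : ℝ) / 2) * Real.exp (-(1 / 2 : ℝ) * (x ⬝ᵥ (S⁻¹ *ᵥ x)))) μ]
  rw [integral_const_mul]
  obtain ⟨M, hM⟩ := posDef_factor hS
  have hd : S.det = M.det ^ 2 := by rw [hM, det_mul, det_transpose, sq]
  have hMd : M.det ≠ 0 := by
    intro h
    have := hS.det_pos
    rw [hd, h] at this
    simp at this
  have hMt : (Mᵀ).det ≠ 0 := by rwa [det_transpose]
  have hmap := Real.map_matrix_volume_pi_eq_smul_volume_pi hMt
  have hcont : Continuous fun x : ι → ℝ => Real.exp (-(1 / 2 : ℝ) * (x ⬝ᵥ (S⁻¹ *ᵥ x))) := by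
    fun_prop
  have h1 : ∫ z : ι → ℝ, Real.exp (-(1 / 2 : ℝ) * ((toLin' Mᵀ z) ⬝ᵥ (S⁻¹ *ᵥ (toLin' Mᵀ z)))) =
      |M.det|⁻¹ * ∫ x : ι → ℝ, Real.exp (-(1 / 2 : ℝ) * (x ⬝ᵥ (S⁻¹ *ᵥ x))) := by
    rw [← integral_map (φ := toLin' Mᵀ)
      (f := fun x : ι → ℝ => Real.exp (-(1 / 2 : ℝ) * (x ⬝ᵥ (S⁻¹ *ᵥ x))))
      (LinearMap.continuous_of_finiteDimensional _).aemeasurable hcont.aestronglyMeasurable,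
      hmap, integral_smul_measure, det_transpose, ENNReal.toReal_ofReal (abs_nonneg _), abs_inv,
      smul_eq_mul]
  have h2 : ∀ z : ι → ℝ, (toLin' Mᵀ z) ⬝ᵥ (S⁻¹ *ᵥ (toLin' Mᵀ z)) = z ⬝ᵥ z := by
    intro z
    have hu : IsUnit M.det := hMd.isUnit
    have hut : IsUnit (Mᵀ).det := hMt.isUnit
    rw [toLin'_apply, mulVec_mulVec, hM, Matrix.mul_inv_rev, Matrix.mul_assoc,
      nonsing_inv_mul _ hut, Matrix.mul_one, mulVec_transpose, ← dotProduct_mulVec, mulVec_mulVec,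
      mul_nonsing_inv _ hu, one_mulVec]
  simp_rw [h2, gauss_std_integral] at h1
  have h3 : ∫ x : ι → ℝ, Real.exp (-(1 / 2 : ℝ) * (x ⬝ᵥ (S⁻¹ *ᵥ x))) =
      |M.det| * (2 * Real.pi) ^ ((Fintype.card ι : ℝ) / 2) := by
    rw [h1, mul_inv_cancel_left₀ (abs_ne_zero.mpr hMd)]
  have h4 : S.det ^ (-(1 : ℝ) / 2) = |M.det|⁻¹ := by
    rw [hd, ← sq_abs, ← Real.rpow_natCast, ← Real.rpow_mul (abs_nonneg _), ← Real.rpow_neg_one]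
    norm_num
  rw [h3, h4, neg_div, Real.rpow_neg (by positivity)]
  have : (2 * Real.pi) ^ ((Fintype.card ι : ℝ) / 2) ≠ 0 := by positivity
  have : |M.det| ≠ 0 := abs_ne_zero.mpr hMd
  field_simp

lemma gaussPDF_lintegral {ι : Type*} [Fintype ι] [DecidableEq ι]
    (μ : ι → ℝ) {S : Matrix ι ι ℝ} (hS : S.PosDef) :
    ∫⁻ x, ENNReal.ofReal (gaussPDF μ S x) = 1 := by
  have h := gaussPDF_integral μ hS
  rw [← ofReal_integral_eq_lintegral_ofReal _ (Filter.Eventually.of_forall fun x =>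
    (gaussPDF_pos μ hS x).le), h, ENNReal.ofReal_one]
  by_contra hn
  rw [integral_undef hn] at h
  simp at h

lemma measurable_gaussPDF {ι α : Type*} [Fintype ι] [DecidableEq ι] [MeasurableSpace α]
    {μ : α → ι → ℝ} {S : α → Matrix ι ι ℝ} {x : α → ι → ℝ}
    (hμ : Measurable μ) (hS : ∀ i j, Measurable fun a => S a i j) (hx : Measurable x) :
    Measurable fun a => gaussPDF (μ a) (S a) (x a) := by
  have hS' : Measurable fun a => (fun i j => S a i j : ι → ι → ℝ) :=
    measurable_pi_lambda _ fun i => measurable_pi_lambda _ fun j => hS i j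
  have hof : Continuous fun M : ι → ι → ℝ => (Matrix.of M : Matrix ι ι ℝ) := continuous_id
  have hdet : Measurable fun a => (S a).det := by
    have h : Continuous fun M : ι → ι → ℝ => (Matrix.of M).det := hof.matrix_det
    exact h.measurable.comp hS'
  have hadj : ∀ i j, Measurable fun a => (S a).adjugate i j := by
    intro i j
    have h : Continuous fun M : ι → ι → ℝ => (Matrix.of M).adjugate i j :=
      hof.matrix_adjugate.matrix_elem i j
    exact h.measurable.comp hS'
  have hinv : ∀ i j, Measurable fun a => (S a)⁻¹ i j := by
    intro i j
    simp only [Matrix.inv_def, Ring.inverse_eq_inv', Matrix.smul_apply, smul_eq_mul]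
    exact hdet.inv.mul (hadj i j)
  have hd : ∀ i, Measurable fun a => (x a - μ a) i := fun i =>
    (measurable_pi_iff.mp hx i).sub (measurable_pi_iff.mp hμ i)
  unfold gaussPDF
  refine ((hdet.pow_const _).const_mul _).mul (Measurable.exp (Measurable.const_mul ?_ _))
  unfold dotProduct mulVec dotProduct
  exact Finset.measurable_sum _ fun i _ => (hd i).mul
    (Finset.measurable_sum _ fun j _ => (hinv i j).mul (hd j))

/-- One layer factor of the densities. -/
def layerFac {K N : ℕ} {T : Fin (K + 2) → ℕ} {m : Fin (K + 1) → ℕ}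
    (f0 : Fin N × Fin (T 0) → ℝ)
    (A : ∀ l : Fin (K + 1), ((Fin N × Fin (T l.castSucc)) → ℝ) →
      Matrix (Fin N × Fin (T l.succ)) (Fin (m l)) ℝ)
    (B : ∀ l : Fin (K + 1), ((Fin N × Fin (T l.castSucc)) → ℝ) →
      Matrix (Fin N × Fin (T l.succ)) (Fin N × Fin (T l.succ)) ℝ)
    (l : Fin (K + 1)) (w : (LatentIx K N T ⊕ IndIx K m) → ℝ) : ℝ :=
  gaussPDF
    (A l (fun q => traj f0 w ⟨l.castSucc, q⟩) *ᵥ fun c => w (Sum.inr ⟨l, c⟩))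
    (B l fun q => traj f0 w ⟨l.castSucc, q⟩)
    (fun q => traj f0 w ⟨l.succ, q⟩)

section layers

variable {K N : ℕ} {T : Fin (K + 2) → ℕ} {m : Fin (K + 1) → ℕ}
    (f0 : Fin N × Fin (T 0) → ℝ)
    (A : ∀ l : Fin (K + 1), ((Fin N × Fin (T l.castSucc)) → ℝ) →
      Matrix (Fin N × Fin (T l.succ)) (Fin (m l)) ℝ)
    (B : ∀ l : Fin (K + 1), ((Fin N × Fin (T l.castSucc)) → ℝ) →
      Matrix (Fin N × Fin (T l.succ)) (Fin N × Fin (T l.succ)) ℝ)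

lemma traj_of_ne (w : (LatentIx K N T ⊕ IndIx K m) → ℝ) (p : TrajIx K N T) (h : p.1 ≠ 0) :
    traj f0 w p = w (Sum.inl ⟨p, h⟩) := by
  unfold traj
  rw [dif_neg h]

lemma traj_congr (w w' : (LatentIx K N T ⊕ IndIx K m) → ℝ) (p : TrajIx K N T)
    (hw : ∀ h : p.1 ≠ 0, w (Sum.inl ⟨p, h⟩) = w' (Sum.inl ⟨p, h⟩)) :
    traj f0 w p = traj f0 w' p := by
  unfold traj
  split_ifs with h
  · rfl
  · exact hw h

lemma measurable_traj (p : TrajIx K N T) :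
    Measurable fun w : (LatentIx K N T ⊕ IndIx K m) → ℝ => traj f0 w p := by
  unfold traj
  split_ifs with h
  · exact measurable_const
  · exact measurable_pi_apply _

lemma layerFac_pos (hBpd : ∀ l x, (B l x).PosDef) (l : Fin (K + 1))
    (w : (LatentIx K N T ⊕ IndIx K m) → ℝ) : 0 < layerFac f0 A B l w :=
  gaussPDF_pos _ (hBpd _ _) _

lemma measurable_layerFac
    (hAmeas : ∀ l i j, Measurable fun x => A l x i j)
    (hBmeas : ∀ l i j, Measurable fun x => B l x i j) (l : Fin (K + 1)) :
    Measurable (layerFac f0 A B l : ((LatentIx K N T ⊕ IndIx K m) → ℝ) → ℝ) := by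
  have ht : ∀ k : Fin (K + 2), Measurable fun (w : (LatentIx K N T ⊕ IndIx K m) → ℝ) =>
      (fun q => traj f0 w ⟨k, q⟩ : Fin N × Fin (T k) → ℝ) := fun k =>
    measurable_pi_lambda _ fun q => measurable_traj f0 _
  refine measurable_gaussPDF ?_ ?_ (ht _)
  · refine measurable_pi_lambda _ fun i => ?_
    unfold mulVec dotProduct
    exact Finset.measurable_sum _ fun j _ =>
      ((hAmeas l i j).comp (ht l.castSucc)).mul (measurable_pi_apply _)
  · exact fun i j => (hBmeas l i j).comp (ht l.castSucc)

lemma layerFac_congr (l : Fin (K + 1)) (fM : IndIx K m → ℝ) (u u' : LatentIx K N T → ℝ)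
    (h : ∀ p : LatentIx K N T, p.1.1.val ≤ l.val + 1 → u p = u' p) :
    layerFac f0 A B l (Sum.elim u fM) = layerFac f0 A B l (Sum.elim u' fM) := by
  have h1 : ∀ q, traj f0 (Sum.elim u fM) ⟨l.castSucc, q⟩ =
      traj f0 (Sum.elim u' fM) ⟨l.castSucc, q⟩ := fun q =>
    traj_congr f0 _ _ _ fun hne => h ⟨_, hne⟩ (by simp)
  have h2 : ∀ q, traj f0 (Sum.elim u fM) ⟨l.succ, q⟩ =
      traj f0 (Sum.elim u' fM) ⟨l.succ, q⟩ := fun q =>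
    traj_congr f0 _ _ _ fun hne => h ⟨_, hne⟩ (by simp)
  unfold layerFac
  simp only [h1, h2, Sum.elim_inr]

/-- The coordinates of layer `l + 1`. -/
def layerSet (K N : ℕ) (T : Fin (K + 2) → ℕ) (l : Fin (K + 1)) : Finset (LatentIx K N T) :=
  Finset.univ.filter fun p => p.1.1 = l.succ

/-- Enumeration of the coordinates of layer `l + 1`. -/
def layerEquiv (K N : ℕ) (T : Fin (K + 2) → ℕ) (l : Fin (K + 1)) :
    (Fin N × Fin (T l.succ)) ≃ layerSet K N T l :=
  Equiv.ofBijective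
    (fun q => ⟨⟨⟨l.succ, q⟩, Fin.succ_ne_zero l⟩, by simp [layerSet]⟩) (by
      constructor
      · intro q q' h
        simpa using h
      · rintro ⟨⟨⟨k, q⟩, hk⟩, hp⟩
        simp only [layerSet, Finset.mem_filter, Finset.mem_univ, true_and] at hp
        subst hp
        exact ⟨q, rfl⟩)

lemma layer_lmarginal (hBpd : ∀ l x, (B l x).PosDef) (l : Fin (K + 1)) (fM : IndIx K m → ℝ)
    (x : LatentIx K N T → ℝ) :
    lmarginal (fun _ => volume) (layerSet K N T l)
      (fun u => ENNReal.ofReal (layerFac f0 A B l (Sum.elim u fM))) x = 1 := by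
  unfold lmarginal
  have e := layerEquiv K N T l
  have hmp := volume_measurePreserving_piCongrLeft (fun _ : layerSet K N T l => ℝ)
    (layerEquiv K N T l)
  change ∫⁻ y : layerSet K N T l → ℝ, _ = 1
  rw [hmp.lintegral_map_equiv]
  have key : ∀ z : Fin N × Fin (T l.succ) → ℝ,
      layerFac f0 A B l (Sum.elim (Function.updateFinset x (layerSet K N T l)
        (MeasurableEquiv.piCongrLeft (fun _ : layerSet K N T l => ℝ) (layerEquiv K N T l) z)) fM) =
      gaussPDF (A l (fun q => traj f0 (Sum.elim x fM) ⟨l.castSucc, q⟩) *ᵥ fun c => fM ⟨l, c⟩)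
        (B l fun q => traj f0 (Sum.elim x fM) ⟨l.castSucc, q⟩) z := by
    intro z
    have h1 : ∀ y : layerSet K N T l → ℝ, ∀ q,
        traj f0 (Sum.elim (Function.updateFinset x (layerSet K N T l) y) fM) ⟨l.castSucc, q⟩ =
        traj f0 (Sum.elim x fM) ⟨l.castSucc, q⟩ := fun y q =>
      traj_congr f0 _ _ _ fun hne => by
        have : (⟨⟨l.castSucc, q⟩, hne⟩ : LatentIx K N T) ∉ layerSet K N T l := by
          simp only [layerSet, Finset.mem_filter, Finset.mem_univ, true_and, Fin.ext_iff,
            Fin.val_succ, Fin.val_castSucc]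
          omega
        simp [Function.updateFinset, this]
    have h2 : ∀ q,
        traj f0 (Sum.elim (Function.updateFinset x (layerSet K N T l)
        (MeasurableEquiv.piCongrLeft (fun _ : layerSet K N T l => ℝ) (layerEquiv K N T l) z)) fM)
          ⟨l.succ, q⟩ = z q := by
      intro q
      rw [traj_of_ne f0 _ _ (Fin.succ_ne_zero l)]
      have hm := (layerEquiv K N T l q).2
      have : (⟨⟨l.succ, q⟩, Fin.succ_ne_zero l⟩ : LatentIx K N T) ∈ layerSet K N T l := hm
      simp only [Sum.elim_inl, Function.updateFinset, this, dif_pos]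
      exact Equiv.piCongrLeft_apply_apply (fun _ : layerSet K N T l => ℝ) (layerEquiv K N T l) z q
    unfold layerFac
    simp only [h1, h2, Sum.elim_inr]
  simp only [key]
  exact gaussPDF_lintegral _ (hBpd _ _)

lemma layers_lmarginal (hAmeas : ∀ l i j, Measurable fun x => A l x i j)
    (hBmeas : ∀ l i j, Measurable fun x => B l x i j)
    (hBpd : ∀ l x, (B l x).PosDef) (fM : IndIx K m → ℝ) (k : ℕ) (hk : k ≤ K + 1) :
    ∀ x : LatentIx K N T → ℝ,
    lmarginal (fun _ => volume) (Finset.univ.filter fun p : LatentIx K N T => p.1.1.val ≤ k)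
      (fun u => ∏ l ∈ Finset.univ.filter (fun l : Fin (K + 1) => l.val < k),
        ENNReal.ofReal (layerFac f0 A B l (Sum.elim u fM))) x = 1 := by
  have hm : ∀ l, Measurable fun u : LatentIx K N T → ℝ =>
      ENNReal.ofReal (layerFac f0 A B l (Sum.elim u fM)) := by
    intro l
    refine ((measurable_layerFac f0 A B hAmeas hBmeas l).comp ?_).ennreal_ofReal
    refine measurable_pi_lambda _ fun i => ?_
    rcases i with i | i
    · exact measurable_pi_apply i
    · exact measurable_const
  induction k with
  | zero =>
    intro x
    have : (Finset.univ.filter fun p : LatentIx K N T => p.1.1.val ≤ 0) = ∅ := by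
      ext p
      have h2 := p.2
      have h3 : p.1.1.val ≠ 0 := fun h => h2 (Fin.ext h)
      simp only [Finset.mem_filter, Finset.mem_univ, true_and, Finset.notMem_empty, iff_false]
      omega
    rw [this]
    simp
  | succ k ih =>
    intro x
    let l : Fin (K + 1) := ⟨k, by omega⟩
    have hs : (Finset.univ.filter fun p : LatentIx K N T => p.1.1.val ≤ k + 1) =
        (Finset.univ.filter fun p : LatentIx K N T => p.1.1.val ≤ k) ∪ layerSet K N T l := by
      ext p
      simp only [layerSet, Finset.mem_union, Finset.mem_filter, Finset.mem_univ, true_and,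
        Fin.ext_iff, Fin.val_succ, l]
      omega
    have hdis : Disjoint (Finset.univ.filter fun p : LatentIx K N T => p.1.1.val ≤ k)
        (layerSet K N T l) := by
      rw [Finset.disjoint_left]
      intro p
      simp only [layerSet, Finset.mem_filter, Finset.mem_univ, true_and,
        Fin.ext_iff, Fin.val_succ, l]
      omega
    have hf : (Finset.univ.filter (fun l : Fin (K + 1) => l.val < k + 1)) =
        insert l (Finset.univ.filter (fun l : Fin (K + 1) => l.val < k)) := by
      ext j
      simp only [Finset.mem_insert, Finset.mem_filter, Finset.mem_univ, true_and, Fin.ext_iff, l]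
      omega
    rw [hs, lmarginal_union _ _ (Finset.measurable_prod _ fun l _ => hm l) hdis]
    rw [← ih (by omega) x]
    congr 1
    funext v
    rw [hf]
    have hn : l ∉ (Finset.univ.filter (fun l : Fin (K + 1) => l.val < k)) := by simp [l]
    simp only [Finset.prod_insert hn]
    unfold lmarginal
    have hc : ∀ y : layerSet K N T l → ℝ,
        (∏ j ∈ Finset.univ.filter (fun l : Fin (K + 1) => l.val < k), ENNReal.ofReal
          (layerFac f0 A B j (Sum.elim (Function.updateFinset v (layerSet K N T l) y) fM))) =
        ∏ j ∈ Finset.univ.filter (fun l : Fin (K + 1) => l.val < k), ENNReal.ofReal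
          (layerFac f0 A B j (Sum.elim v fM)) := by
      intro y
      refine Finset.prod_congr rfl fun j hj => ?_
      simp only [Finset.mem_filter, Finset.mem_univ, true_and] at hj
      rw [layerFac_congr]
      intro p hp
      have : p ∉ layerSet K N T l := by
        simp only [layerSet, Finset.mem_filter, Finset.mem_univ, true_and, Fin.ext_iff,
          Fin.val_succ, l]
        omega
      simp [Function.updateFinset, this]
    simp only [hc]
    have hml : Measurable fun y : layerSet K N T l → ℝ => ENNReal.ofReal (layerFac f0 A B l
        (Sum.elim (Function.updateFinset v (layerSet K N T l) y) fM)) :=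
      (hm l).comp measurable_updateFinset
    rw [lintegral_mul_const _ hml]
    have := layer_lmarginal f0 A B hBpd l fM v
    unfold lmarginal at this
    rw [this, one_mul]

lemma layers_lintegral (hAmeas : ∀ l i j, Measurable fun x => A l x i j)
    (hBmeas : ∀ l i j, Measurable fun x => B l x i j)
    (hBpd : ∀ l x, (B l x).PosDef) (fM : IndIx K m → ℝ) :
    ∫⁻ u : LatentIx K N T → ℝ, ENNReal.ofReal (∏ l, layerFac f0 A B l (Sum.elim u fM)) = 1 := by
  have h := layers_lmarginal f0 A B hAmeas hBmeas hBpd fM (K + 1) le_rfl 0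
  have h1 : (Finset.univ.filter fun p : LatentIx K N T => p.1.1.val ≤ K + 1) = Finset.univ := by
    ext p
    have := p.1.1.2
    simp only [Finset.mem_filter, Finset.mem_univ, true_and, iff_true]
    omega
  have h2 : (Finset.univ.filter fun l : Fin (K + 1) => l.val < K + 1) = Finset.univ := by
    exact Finset.filter_true_of_mem fun l _ => l.2
  rw [h1, h2, lmarginal_univ] at h
  rw [← h]
  refine lintegral_congr fun u => ?_
  rw [ENNReal.ofReal_prod_of_nonneg fun l _ => (layerFac_pos f0 A B hBpd l _).le]

end layers

section meas

lemma prod_part {X Y : Type*} [MeasureSpace X] [MeasureSpace Y]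
    [SFinite (volume : Measure X)] [SFinite (volume : Measure Y)]
    (L : X × Y → ℝ) (g : Y → ℝ) (hLm : Measurable L) (hg : Measurable g) (hpos : ∀ p, 0 ≤ L p)
    (hL : ∀ y, ∫⁻ x, ENNReal.ofReal (L (x, y)) = 1) (hI : Integrable g) :
    Integrable (fun p => L p * g p.2) ∧ ∫ p, L p * g p.2 = ∫ y, g y := by
  have hL1 : ∀ y, Integrable fun x => L (x, y) := by
    intro y
    refine ⟨(hLm.comp (measurable_id.prodMk measurable_const)).aestronglyMeasurable, ?_⟩
    rw [hasFiniteIntegral_iff_ofReal (Filter.Eventually.of_forall fun u => hpos _), hL]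
    exact ENNReal.one_lt_top
  have hL2 : ∀ y, ∫ x, L (x, y) = 1 := by
    intro y
    rw [integral_eq_lintegral_of_nonneg_ae (Filter.Eventually.of_forall fun u => hpos _)
      (hL1 y).1, hL, ENNReal.toReal_one]
  have hint : Integrable (fun p => L p * g p.2) := by
    have hms : AEStronglyMeasurable (fun p : X × Y => L p * g p.2) (volume.prod volume) :=
      (hLm.mul (hg.comp measurable_snd)).aestronglyMeasurable
    refine (integrable_prod_iff' hms).mpr ⟨?_, ?_⟩
    · exact Filter.Eventually.of_forall fun y => (hL1 y).mul_const (g y)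
    · refine hI.norm.congr (Filter.Eventually.of_forall fun y => ?_)
      have h1 : ∀ x, ‖L (x, y)‖ = L (x, y) := fun u => Real.norm_of_nonneg (hpos _)
      simp only [norm_mul, h1]
      rw [integral_mul_const, hL2, one_mul]
  refine ⟨hint, (integral_prod_symm _ hint).trans ?_⟩
  simp only [integral_mul_const, hL2, one_mul]

lemma sumPi_mp (α β : Type*) [Fintype α] [Fintype β] :
    ∃ E : ((α → ℝ) × (β → ℝ)) ≃ᵐ (α ⊕ β → ℝ), MeasurePreserving E ∧
      ∀ p, E p = Sum.elim p.1 p.2 := by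
  refine ⟨(MeasurableEquiv.sumPiEquivProdPi (fun _ : α ⊕ β => ℝ)).symm,
    volume_measurePreserving_sumPiEquivProdPi_symm (fun _ : α ⊕ β => ℝ), fun p => ?_⟩
  funext i
  rcases i with i | i <;> rfl

variable {K N : ℕ} {T : Fin (K + 2) → ℕ} {m : Fin (K + 1) → ℕ}

/-- Splitting off the final-layer output of data point `n`. -/
def splitEquiv (K N : ℕ) (T : Fin (K + 2) → ℕ) (m : Fin (K + 1) → ℕ) (n : Fin N) :
    (Fin (T (Fin.last (K + 1))) ⊕ (RestIx K N T n ⊕ IndIx K m)) ≃ (LatentIx K N T ⊕ IndIx K m) :=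
  Equiv.ofBijective
    (Sum.elim (fun i => Sum.inl ⟨⟨Fin.last (K + 1), (n, i)⟩, Fin.last_pos.ne'⟩)
      (Sum.elim (fun p => Sum.inl ⟨p.1, p.2.1⟩) Sum.inr)) (by
      constructor
      · rintro (i | p | k) (i' | p' | k') h
        · simpa using h
        · exfalso
          have h' := congrArg Subtype.val (Sum.inl_injective h)
          exact p'.2.2 (by rw [← show _ = p'.1 from h']; exact ⟨rfl, rfl⟩)
        · exact absurd h (by simp)
        · exfalso
          have h' := congrArg Subtype.val (Sum.inl_injective h)
          exact p.2.2 (by rw [show p.1 = _ from h']; exact ⟨rfl, rfl⟩)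
        · have h' := congrArg Subtype.val (Sum.inl_injective h)
          have : p = p' := Subtype.ext h'
          rw [this]
        · exact absurd h (by simp)
        · exact absurd h (by simp)
        · exact absurd h (by simp)
        · simpa using h
      · rintro (⟨⟨k, a, i⟩, hk⟩ | k)
        · by_cases h : k = Fin.last (K + 1) ∧ a = n
          · obtain ⟨rfl, rfl⟩ := h
            exact ⟨Sum.inl i, rfl⟩
          · exact ⟨Sum.inr (Sum.inl ⟨⟨k, a, i⟩, hk, h⟩), rfl⟩
        · exact ⟨Sum.inr (Sum.inr k), rfl⟩)

lemma reassemble_mp (n : Fin N) :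
    ∃ E : ((Fin (T (Fin.last (K + 1))) → ℝ) × ((RestIx K N T n ⊕ IndIx K m) → ℝ)) ≃ᵐ
        ((LatentIx K N T ⊕ IndIx K m) → ℝ), MeasurePreserving E ∧
      ∀ p, E p = reassemble n p.1 p.2 := by
  obtain ⟨E, hE, hE'⟩ := sumPi_mp (Fin (T (Fin.last (K + 1)))) (RestIx K N T n ⊕ IndIx K m)
  have hmp := volume_measurePreserving_piCongrLeft (fun _ : LatentIx K N T ⊕ IndIx K m => ℝ)
    (splitEquiv K N T m n)
  refine ⟨E.trans (MeasurableEquiv.piCongrLeft (fun _ => ℝ) (splitEquiv K N T m n)),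
    hmp.comp hE, fun p => ?_⟩
  funext i
  obtain ⟨z, rfl⟩ := (splitEquiv K N T m n).surjective i
  rw [MeasurableEquiv.trans_apply, hE']
  refine (Equiv.piCongrLeft_apply_apply (fun _ : LatentIx K N T ⊕ IndIx K m => ℝ)
    (splitEquiv K N T m n) _ z).trans ?_
  rcases z with i | z | k
  · have hz : splitEquiv K N T m n (Sum.inl i) =
      Sum.inl ⟨⟨Fin.last (K + 1), (n, i)⟩, Fin.last_pos.ne'⟩ := rfl
    rw [hz]
    simp [reassemble]
  · have hz : splitEquiv K N T m n (Sum.inr (Sum.inl z)) = Sum.inl ⟨z.1, z.2.1⟩ := rfl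
    rw [hz]
    simp only [reassemble, Sum.elim_inr]
    rw [dif_neg z.2.2]
  · rfl

lemma traj_reassemble (f0 : Fin N × Fin (T 0) → ℝ) (n : Fin N)
    (y : Fin (T (Fin.last (K + 1))) → ℝ) (v : (RestIx K N T n ⊕ IndIx K m) → ℝ) :
    (fun i => traj f0 (reassemble n y v) ⟨Fin.last (K + 1), (n, i)⟩) = y := by
  funext i
  rw [traj_of_ne f0 _ _ Fin.last_pos.ne']
  simp [reassemble]

variable 
    (f0 : Fin N × Fin (T 0) → ℝ)
    (μM : IndIx K m → ℝ) (SM : Matrix (IndIx K m) (IndIx K m) ℝ) (hSM : SM.PosDef)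
    (A : ∀ l : Fin (K + 1), ((Fin N × Fin (T l.castSucc)) → ℝ) →
      Matrix (Fin N × Fin (T l.succ)) (Fin (m l)) ℝ)
    (B : ∀ l : Fin (K + 1), ((Fin N × Fin (T l.castSucc)) → ℝ) →
      Matrix (Fin N × Fin (T l.succ)) (Fin N × Fin (T l.succ)) ℝ)
    (hAmeas : ∀ l i j, Measurable fun x => A l x i j)
    (hBmeas : ∀ l i j, Measurable fun x => B l x i j)
    (hBpd : ∀ l x, (B l x).PosDef)

lemma qdens_eq (w : (LatentIx K N T ⊕ IndIx K m) → ℝ) : qdens f0 μM SM A B w =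
    gaussPDF μM SM (fun k => w (Sum.inr k)) * ∏ l, layerFac f0 A B l w := rfl

include hSM hBpd in
lemma qdens_pos (w : (LatentIx K N T ⊕ IndIx K m) → ℝ) : 0 < qdens f0 μM SM A B w :=
  mul_pos (gaussPDF_pos _ hSM _) (Finset.prod_pos fun l _ => layerFac_pos f0 A B hBpd l w)

include hAmeas hBmeas in
lemma measurable_qdens : Measurable (qdens f0 μM SM A B) := by
  have h1 : Measurable fun w : (LatentIx K N T ⊕ IndIx K m) → ℝ =>
      gaussPDF μM SM (fun k => w (Sum.inr k)) :=
    measurable_gaussPDF measurable_const (fun _ _ => measurable_const)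
      (measurable_pi_lambda _ fun k => measurable_pi_apply _)
  exact h1.mul (Finset.measurable_prod _ fun l _ => measurable_layerFac f0 A B hAmeas hBmeas l)

include hSM hAmeas hBmeas hBpd in
lemma lik_part (pLik : (Fin (T (Fin.last (K + 1))) → ℝ) → ℝ) (hpMeas : Measurable pLik)
    (n : Fin N)
    (hI2 : ∀ (y : Fin (T (Fin.last (K + 1))) → ℝ),
      Integrable fun v : (RestIx K N T n ⊕ IndIx K m) → ℝ =>
        qdens f0 μM SM A B (reassemble n y v))
    (hI3 : Integrable fun y : Fin (T (Fin.last (K + 1))) → ℝ =>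
      qmarg f0 μM SM A B n y * Real.log (pLik y)) :
    Integrable (fun w : (LatentIx K N T ⊕ IndIx K m) → ℝ => qdens f0 μM SM A B w *
        Real.log (pLik fun i => traj f0 w ⟨Fin.last (K + 1), (n, i)⟩)) ∧
      ∫ w : (LatentIx K N T ⊕ IndIx K m) → ℝ, qdens f0 μM SM A B w *
        Real.log (pLik fun i => traj f0 w ⟨Fin.last (K + 1), (n, i)⟩) =
      ∫ y, qmarg f0 μM SM A B n y * Real.log (pLik y) := by
  obtain ⟨E, hE, hE'⟩ := reassemble_mp (K := K) (T := T) (m := m) n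
  have hq := measurable_qdens f0 μM SM A B hAmeas hBmeas
  have hfun : ∀ p, qdens f0 μM SM A B (E p) *
      Real.log (pLik fun i => traj f0 (E p) ⟨Fin.last (K + 1), (n, i)⟩) =
      qdens f0 μM SM A B (E p) * Real.log (pLik p.1) := by
    intro p
    rw [hE', traj_reassemble]
  have hint : Integrable fun p => qdens f0 μM SM A B (E p) * Real.log (pLik p.1) := by
    have hms : AEStronglyMeasurable
        (fun p => qdens f0 μM SM A B (E p) * Real.log (pLik p.1)) (volume.prod volume) :=
      ((hq.comp E.measurable).mul
        (hpMeas.comp measurable_fst).log).aestronglyMeasurable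
    refine (integrable_prod_iff hms).mpr ⟨?_, ?_⟩
    · refine Filter.Eventually.of_forall fun y => ?_
      simp only [hE']
      exact (hI2 y).mul_const _
    · refine hI3.norm.congr (Filter.Eventually.of_forall fun y => ?_)
      have h0 : 0 ≤ qmarg f0 μM SM A B n y :=
        integral_nonneg fun v => (qdens_pos f0 μM SM hSM A B hBpd _).le
      simp only [hE', norm_mul]
      rw [integral_mul_const, Real.norm_of_nonneg h0]
      congr 1
      exact integral_congr_ae (Filter.Eventually.of_forall fun v =>
        (Real.norm_of_nonneg (qdens_pos f0 μM SM hSM A B hBpd _).le).symm)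
  constructor
  · rw [← hE.integrable_comp_emb E.measurableEmbedding]
    exact hint.congr (Filter.Eventually.of_forall fun p => (hfun p).symm)
  · rw [← hE.integral_comp']
    simp only [hfun]
    refine (integral_prod _ hint).trans ?_
    simp only [hE', integral_mul_const]
    rfl

include hSM hAmeas hBmeas hBpd in
lemma ind_part (h : (IndIx K m → ℝ) → ℝ) (hm : Measurable h)
    (hI4 : Integrable fun fM : IndIx K m → ℝ => gaussPDF μM SM fM * h fM) :
    Integrable (fun w : (LatentIx K N T ⊕ IndIx K m) → ℝ => qdens f0 μM SM A B w *
        h (fun k => w (Sum.inr k))) ∧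
      ∫ w : (LatentIx K N T ⊕ IndIx K m) → ℝ, qdens f0 μM SM A B w *
        h (fun k => w (Sum.inr k)) =
      ∫ fM, gaussPDF μM SM fM * h fM := by
  obtain ⟨E, hE, hE'⟩ := sumPi_mp (LatentIx K N T) (IndIx K m)
  have hq := measurable_qdens f0 μM SM A B hAmeas hBmeas
  have hfun : ∀ p : (LatentIx K N T → ℝ) × (IndIx K m → ℝ), qdens f0 μM SM A B (E p) *
      h (fun k => E p (Sum.inr k)) =
      (∏ l, layerFac f0 A B l (E p)) * (gaussPDF μM SM p.2 * h p.2) := by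
    intro p
    rw [qdens_eq]
    have : (fun k => E p (Sum.inr k)) = p.2 := by rw [hE']; rfl
    rw [this]
    ring
  have hLm : Measurable fun p => ∏ l, layerFac f0 A B l (E p) :=
    Finset.measurable_prod _ fun l _ =>
      (measurable_layerFac f0 A B hAmeas hBmeas l).comp E.measurable
  have hpos : ∀ w, 0 ≤ ∏ l, layerFac f0 A B l w := fun w =>
    Finset.prod_nonneg fun l _ => (layerFac_pos f0 A B hBpd l w).le
  have hg0 : Measurable fun fM : IndIx K m → ℝ => gaussPDF μM SM fM :=
    measurable_gaussPDF measurable_const (fun _ _ => measurable_const) measurable_id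
  have hg : Measurable fun fM : IndIx K m → ℝ => gaussPDF μM SM fM * h fM := hg0.mul hm
  have hL : ∀ fM, ∫⁻ u : LatentIx K N T → ℝ,
      ENNReal.ofReal (∏ l, layerFac f0 A B l (E (u, fM))) = 1 := by
    intro fM
    rw [← layers_lintegral f0 A B hAmeas hBmeas hBpd fM]
    exact lintegral_congr fun u => by rw [hE']
  have hint := prod_part (fun p => ∏ l, layerFac f0 A B l (E p))
    (fun fM => gaussPDF μM SM fM * h fM) hLm hg (fun p => hpos _) hL hI4
  constructor
  · rw [← hE.integrable_comp_emb E.measurableEmbedding]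
    exact hint.1.congr (Filter.Eventually.of_forall fun p => (hfun p).symm)
  · rw [← hE.integral_comp', ← hint.2]
    exact integral_congr_ae (Filter.Eventually.of_forall hfun)

end meas

/-- **Evidence lower bound decomposition for the DGP variational family.**
`∫ q log(p/q) = Σ_n ∫ q_n log p_n − KL(q(f_M) ‖ ∏_l N(f_M^l; 0, P^l))`. -/
theorem elbo_decomposition (K N : ℕ) (hN : 1 ≤ N)
    (T : Fin (K + 2) → ℕ) (m : Fin (K + 1) → ℕ)
    (f0 : Fin N × Fin (T 0) → ℝ)
    (μM : IndIx K m → ℝ) (SM : Matrix (IndIx K m) (IndIx K m) ℝ) (hSM : SM.PosDef)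
    (A : ∀ l : Fin (K + 1), ((Fin N × Fin (T l.castSucc)) → ℝ) →
      Matrix (Fin N × Fin (T l.succ)) (Fin (m l)) ℝ)
    (B : ∀ l : Fin (K + 1), ((Fin N × Fin (T l.castSucc)) → ℝ) →
      Matrix (Fin N × Fin (T l.succ)) (Fin N × Fin (T l.succ)) ℝ)
    (hAmeas : ∀ l i j, Measurable fun x => A l x i j)
    (hBmeas : ∀ l i j, Measurable fun x => B l x i j)
    (hBpd : ∀ l x, (B l x).PosDef)
    (P : ∀ l : Fin (K + 1), Matrix (Fin (m l)) (Fin (m l)) ℝ)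
    (hP : ∀ l, (P l).PosDef)
    (pLik : Fin N → (Fin (T (Fin.last (K + 1))) → ℝ) → ℝ)
    (hpPos : ∀ n x, 0 < pLik n x) (hpMeas : ∀ n, Measurable (pLik n))
    (hI1 : Integrable fun w : (LatentIx K N T ⊕ IndIx K m) → ℝ =>
      qdens f0 μM SM A B w * Real.log (pdens f0 pLik A B P w / qdens f0 μM SM A B w))
    (hI2 : ∀ (n : Fin N) (y : Fin (T (Fin.last (K + 1))) → ℝ),
      Integrable fun v : (RestIx K N T n ⊕ IndIx K m) → ℝ =>
        qdens f0 μM SM A B (reassemble n y v))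
    (hI3 : ∀ n : Fin N, Integrable fun y : Fin (T (Fin.last (K + 1))) → ℝ =>
      qmarg f0 μM SM A B n y * Real.log (pLik n y))
    (hI4 : Integrable fun fM : IndIx K m → ℝ =>
      gaussPDF μM SM fM *
        Real.log (gaussPDF μM SM fM /
          ∏ l : Fin (K + 1), gaussPDF (0 : Fin (m l) → ℝ) (P l) fun c => fM ⟨l, c⟩)) :
    (∫ w : (LatentIx K N T ⊕ IndIx K m) → ℝ,
        qdens f0 μM SM A B w * Real.log (pdens f0 pLik A B P w / qdens f0 μM SM A B w)) =
      (∑ n : Fin N, ∫ y : Fin (T (Fin.last (K + 1))) → ℝ,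
          qmarg f0 μM SM A B n y * Real.log (pLik n y)) -
        ∫ fM : IndIx K m → ℝ,
          gaussPDF μM SM fM *
            Real.log (gaussPDF μM SM fM /
              ∏ l : Fin (K + 1), gaussPDF (0 : Fin (m l) → ℝ) (P l) fun c => fM ⟨l, c⟩) := by

  have hlik := fun n => lik_part f0 μM SM hSM A B hAmeas hBmeas hBpd (pLik n) (hpMeas n) n
    (hI2 n) (hI3 n)
  have hprior : Measurable fun fM : IndIx K m → ℝ =>
      ∏ l : Fin (K + 1), gaussPDF (0 : Fin (m l) → ℝ) (P l) fun c => fM ⟨l, c⟩ :=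
    Finset.measurable_prod _ fun l _ => measurable_gaussPDF measurable_const
      (fun _ _ => measurable_const) (measurable_pi_lambda _ fun c => measurable_pi_apply _)
  have hgm : Measurable fun fM : IndIx K m → ℝ => gaussPDF μM SM fM :=
    measurable_gaussPDF measurable_const (fun _ _ => measurable_const) measurable_id
  have hind := ind_part f0 μM SM hSM A B hAmeas hBmeas hBpd
    (fun fM => Real.log (gaussPDF μM SM fM /
          ∏ l : Fin (K + 1), gaussPDF (0 : Fin (m l) → ℝ) (P l) fun c => fM ⟨l, c⟩))
    (hgm.div hprior).log hI4
  have key : ∀ w : (LatentIx K N T ⊕ IndIx K m) → ℝ,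
      qdens f0 μM SM A B w * Real.log (pdens f0 pLik A B P w / qdens f0 μM SM A B w) =
      (∑ n : Fin N, qdens f0 μM SM A B w *
        Real.log (pLik n fun i => traj f0 w ⟨Fin.last (K + 1), (n, i)⟩)) -
      qdens f0 μM SM A B w * Real.log (gaussPDF μM SM (fun k => w (Sum.inr k)) /
          ∏ l : Fin (K + 1), gaussPDF (0 : Fin (m l) → ℝ) (P l) fun c => w (Sum.inr ⟨l, c⟩)) := by
    intro w
    rw [← Finset.mul_sum, ← mul_sub]
    congr 1
    have hp : pdens f0 pLik A B P w =
      (∏ n' : Fin N, pLik n' fun i => traj f0 w ⟨Fin.last (K + 1), (n', i)⟩) *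
      (∏ l, layerFac f0 A B l w) *
      ∏ l : Fin (K + 1), gaussPDF (0 : Fin (m l) → ℝ) (P l) (fun c => w (Sum.inr ⟨l, c⟩)) := rfl
    rw [hp, qdens_eq]
    have h1 : (∏ n' : Fin N, pLik n' fun i => traj f0 w ⟨Fin.last (K + 1), (n', i)⟩) ≠ 0 :=
      (Finset.prod_pos fun n _ => hpPos n _).ne'
    have h2 : (∏ l, layerFac f0 A B l w) ≠ 0 :=
      (Finset.prod_pos fun l _ => layerFac_pos f0 A B hBpd l w).ne'
    have h3 : (∏ l : Fin (K + 1),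
        gaussPDF (0 : Fin (m l) → ℝ) (P l) (fun c => w (Sum.inr ⟨l, c⟩))) ≠ 0 :=
      (Finset.prod_pos fun l _ => gaussPDF_pos _ (hP l) _).ne'
    have h4 : gaussPDF μM SM (fun k => w (Sum.inr k)) ≠ 0 := (gaussPDF_pos _ hSM _).ne'
    rw [Real.log_div (mul_ne_zero (mul_ne_zero h1 h2) h3) (mul_ne_zero h4 h2),
      Real.log_mul (mul_ne_zero h1 h2) h3, Real.log_mul h1 h2, Real.log_mul h4 h2,
      Real.log_div h4 h3, Real.log_prod fun n _ => (hpPos n _).ne']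
    ring
  simp only [key]
  rw [integral_sub (integrable_finsetSum _ fun n _ => (hlik n).1) hind.1,
    integral_finsetSum _ fun n _ => (hlik n).1, hind.2]
  congr 1
  exact Finset.sum_congr rfl fun n _ => (hlik n).2

end
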